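/- For every (m × n)-matrix M over a field K (with columns indexed by Fin n), there exists an invertible upper-triangular (n × n)-matrix V such that the matrix M · V has the distinct pivot property: any two distinct nonzero columns of M · V have distinct pivots. -/

import Mathlib

open Matrix

/-- For a nonzero vector over a finite linearly ordered index set, its pivot is the
largest index at which the vector is nonzero. -/
noncomputable def pivot {K : Type*} [Zero K] {m : Type*} [Fintype m] [LinearOrder m]
    (v : m → K) (hv : v ≠ 0) : m := by
  classical
  refine (Finset.univ.filter fun i => v i ≠ 0).max' ?_
  obtain ⟨i, hi⟩ : ∃ i, v i ≠ 0 := by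
    by_contra h
    push_neg at h
    exact hv (funext fun i => h i)
  exact ⟨i, Finset.mem_filter.mpr ⟨Finset.mem_univ i, hi⟩⟩

theorem pivot_spec {K : Type*} [Zero K] {m : Type*} [Fintype m] [LinearOrder m]
    (v : m → K) (hv : v ≠ 0) : v (pivot v hv) ≠ 0 ∧ ∀ i, pivot v hv < i → v i = 0 := by
  classical
  constructor
  · exact (Finset.mem_filter.mp (Finset.max'_mem (Finset.univ.filter fun i => v i ≠ 0) _)).2
  · intro i hi
    by_contra h
    exact absurd (Finset.le_max' (Finset.univ.filter fun i => v i ≠ 0) i (by simp [h]))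
      (not_le.mpr hi)

/-- Every matrix `M` over a field can be brought to a matrix with the
distinct pivot property by right-multiplication with an invertible upper-triangular
matrix `V`. -/
theorem exists_upperTriangular_mul_distinct_pivots {K : Type*} [Field K] {m n : ℕ}
    (M : Matrix (Fin m) (Fin n) K) :
    ∃ V : Matrix (Fin n) (Fin n) K, IsUnit V ∧ V.BlockTriangular id ∧
      ∀ j k, j ≠ k → ∀ (hj : (M * V)ᵀ j ≠ 0) (hk : (M * V)ᵀ k ≠ 0),
        pivot ((M * V)ᵀ j) hj ≠ pivot ((M * V)ᵀ k) hk := by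
  classical
  have hex : ∀ j : Fin n, ∃ d : ℕ, ∃ v : Fin n → K, v j = 1 ∧ (∀ i, j < i → v i = 0) ∧
      ∀ i : Fin m, d ≤ i.val → (M *ᵥ v) i = 0 := fun j =>
    ⟨m, Pi.single j 1, by simp, fun i hi => by simp [hi.ne'],
      fun i hi => absurd i.isLt (by omega)⟩
  choose v hv1 hv2 hv3 using fun j => Nat.find_spec (hex j)
  have hcol : ∀ j, (M * (Matrix.of fun i j => v j i))ᵀ j = M *ᵥ v j := by
    intro j
    ext i
    simp [Matrix.mul_apply, Matrix.mulVec, dotProduct]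
  have htri : (Matrix.of fun i j => v j i).BlockTriangular id := by
    intro i j hij
    exact hv2 j i hij
  have key : ∀ j k, j < k → ∀ (hj : M *ᵥ v j ≠ 0) (hk : M *ᵥ v k ≠ 0),
      pivot (M *ᵥ v j) hj ≠ pivot (M *ᵥ v k) hk := by
    intro j k hjk hj hk h
    obtain ⟨p, hp⟩ : ∃ p, pivot (M *ᵥ v k) hk = p := ⟨_, rfl⟩
    rw [hp] at h
    have aj := pivot_spec _ hj
    have ak := pivot_spec _ hk
    rw [h] at aj
    rw [hp] at ak
    have hle : Nat.find (hex k) ≤ p.val := by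
      refine Nat.find_min' (hex k) ⟨v k - ((M *ᵥ v k) p / (M *ᵥ v j) p) • v j, ?_, ?_, ?_⟩
      · simp [hv1, hv2 j k hjk]
      · intro i hi
        simp [hv2 k i hi, hv2 j i (hjk.trans hi)]
      · intro i hi
        rw [Matrix.mulVec_sub, Matrix.mulVec_smul, Pi.sub_apply, Pi.smul_apply, smul_eq_mul]
        rcases (show p ≤ i from hi).eq_or_lt with e | e
        · subst e
          rw [div_mul_cancel₀ _ aj.1, sub_self]
        · rw [aj.2 i e, ak.2 i e]
          simp
    exact ak.1 (hv3 k p hle)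
  refine ⟨Matrix.of fun i j => v j i, ?_, htri, ?_⟩
  · rw [Matrix.isUnit_iff_isUnit_det, Matrix.det_of_upperTriangular htri]
    simp [hv1]
  · intro j k hjk
    rw [hcol, hcol]
    intro hj hk
    rcases lt_or_gt_of_ne hjk with h | h
    · exact key j k h hj hk
    · exact (key k j h hk hj).symm
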